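/- Let K > 0, β > 0, l ≥ 0, and let c ∈ X satisfy c_n = 0 for all |n| > l. Then for every integer p > 1, every x ∈ X_β, and every n ∈ ℤ: |(K/p!)·((c+x)^{*p})_n| ≤ (K/p!)·( |(c^{*p})_n| + Σ_{k=0}^{p-1} binom(p,k) Σ_{j=-lk}^{lk} |(c^{*k})_j| · 10^{p-k-1} β^{p-k}/(|n-j|+1)² ). -/

import Mathlib

open scoped Real
open Complex Filter

/-- Convolution of two two-sided sequences of complex numbers. -/
noncomputable def conv (x y : ℤ → ℂ) : ℤ → ℂ := fun n => ∑' k : ℤ, x k * y (n - k)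

/-- `convPow x k` is the `k`-fold convolution power `x^{*k}`;
`x^{*0}` is the unit (Kronecker delta at `0`). -/
noncomputable def convPow (x : ℤ → ℂ) : ℕ → ℤ → ℂ
  | 0 => fun n => if n = 0 then 1 else 0
  | k + 1 => conv (convPow x k) x

/-- Membership in `X_β`: decay `|x_n| ≤ β/(|n|+1)^2` and the symmetry `x_{-n} = conj x_n`. -/
def memX (β : ℝ) (x : ℤ → ℂ) : Prop :=
  (∀ n : ℤ, ‖x n‖ ≤ β / (|(n : ℝ)| + 1) ^ 2) ∧ (∀ n : ℤ, x (-n) = starRingEnd ℂ (x n))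

noncomputable def wt (n : ℤ) : ℝ := 1 / (|(n : ℝ)| + 1) ^ 2

lemma wt_pos (n : ℤ) : 0 < wt n := by unfold wt; positivity

lemma wt_neg (n : ℤ) : wt (-n) = wt n := by simp [wt]

lemma hasSum_wt : HasSum wt (π ^ 2 / 3 - 1) := by
  have h0 : HasSum (fun n : ℕ => wt ((n : ℤ) + 1)) (π ^ 2 / 6 - 1) := by
    have h := (hasSum_nat_add_iff' (f := fun n : ℕ => 1 / (n : ℝ) ^ 2) 2).mpr hasSum_zeta_two
    have e : π ^ 2 / 6 - ∑ i ∈ Finset.range 2, 1 / ((i : ℕ) : ℝ) ^ 2 = π ^ 2 / 6 - 1 := by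
      simp [Finset.sum_range_succ]
    rw [e] at h
    refine h.congr_fun ?_
    intro n
    have : |(n : ℝ) + 1| = n + 1 := abs_of_nonneg (by positivity)
    simp only [wt]
    push_cast
    rw [this]
    ring
  have h1 : HasSum (fun n : ℕ => wt (n : ℤ)) (π ^ 2 / 6) := by
    have := (hasSum_nat_add_iff (f := fun n : ℕ => wt (n : ℤ)) 1 (g := π ^ 2 / 6 - 1)).mp
      (by simpa using h0)
    simpa [wt] using this
  have h2 : HasSum (fun n : ℕ => wt (-((n : ℤ) + 1))) (π ^ 2 / 6 - 1) := by
    simpa only [wt_neg] using h0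
  have := HasSum.of_nat_of_neg_add_one h1 h2
  convert this using 1
  ring

lemma wt_mul_le (n k : ℤ) : wt k * wt (n - k) ≤ (2 * wt n) * (wt k + wt (n - k)) := by
  unfold wt
  have h : |(n : ℝ)| ≤ |(k : ℝ)| + |((n - k : ℤ) : ℝ)| := by
    have := abs_add_le (k : ℝ) ((n - k : ℤ) : ℝ)
    push_cast at *
    simpa using this
  set a := |(k : ℝ)| + 1 with ha
  set b := |((n - k : ℤ) : ℝ)| + 1 with hb
  set d := |(n : ℝ)| + 1 with hd
  have ha0 : 0 < a := by positivity
  have hb0 : 0 < b := by positivity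
  have hd0 : 0 < d := by positivity
  have hdab : d ≤ a + b := by linarith
  have : d ^ 2 ≤ 2 * (a ^ 2 + b ^ 2) := by nlinarith [sq_nonneg (a - b)]
  have e : 2 * (1 / d ^ 2) * (1 / a ^ 2 + 1 / b ^ 2)
      = (2 * (a ^ 2 + b ^ 2)) / (a ^ 2 * b ^ 2 * d ^ 2) := by field_simp; ring
  have e2 : 1 / a ^ 2 * (1 / b ^ 2) = d ^ 2 / (a ^ 2 * b ^ 2 * d ^ 2) := by field_simp
  rw [e, e2]
  gcongr

lemma hasSum_wt_maj (n : ℤ) : HasSum (fun k => (2 * wt n) * (wt k + wt (n - k)))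
    ((2 * wt n) * ((π ^ 2 / 3 - 1) + (π ^ 2 / 3 - 1))) := by
  refine HasSum.mul_left _ (hasSum_wt.add ?_)
  have h := (Equiv.hasSum_iff (f := wt) (a := π ^ 2 / 3 - 1) (Equiv.subLeft n)).mpr hasSum_wt
  have e : wt ∘ (Equiv.subLeft n) = fun k => wt (n - k) := by
    funext k
    simp
  rw [e] at h
  exact h

lemma conv_bound {A B : ℝ} {x y : ℤ → ℂ} (hx : ∀ n, ‖x n‖ ≤ A * wt n)
    (hy : ∀ n, ‖y n‖ ≤ B * wt n) (hA : 0 ≤ A) (hB : 0 ≤ B) (n : ℤ) :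
    Summable (fun k => x k * y (n - k)) ∧ ‖conv x y n‖ ≤ (10 * (A * B)) * wt n := by
  have hs := (hasSum_wt_maj n).mul_left (A * B)
  have hle : ∀ k, ‖x k * y (n - k)‖ ≤ (A * B) * ((2 * wt n) * (wt k + wt (n - k))) := by
    intro k
    rw [norm_mul]
    calc ‖x k‖ * ‖y (n - k)‖ ≤ (A * wt k) * (B * wt (n - k)) :=
          mul_le_mul (hx k) (hy _) (norm_nonneg _) (mul_nonneg hA (wt_pos k).le)
      _ = (A * B) * (wt k * wt (n - k)) := by ring
      _ ≤ _ := mul_le_mul_of_nonneg_left (wt_mul_le n k) (mul_nonneg hA hB)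
  refine ⟨Summable.of_norm_bounded hs.summable hle, ?_⟩
  have hc : ‖conv x y n‖ ≤ _ := tsum_of_norm_bounded (f := fun k => x k * y (n - k)) hs hle
  refine hc.trans ?_
  have hpi : π ^ 2 ≤ 10 := by nlinarith [Real.pi_lt_d2, Real.pi_pos]
  have h0 : 0 ≤ A * B * wt n := mul_nonneg (mul_nonneg hA hB) (wt_pos n).le
  have e : A * B * (2 * wt n * ((π ^ 2 / 3 - 1) + (π ^ 2 / 3 - 1)))
      = (A * B * wt n) * (4 * (π ^ 2 / 3 - 1)) := by ring
  have e2 : 10 * (A * B) * wt n = (A * B * wt n) * 10 := by ring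
  rw [e, e2]
  exact mul_le_mul_of_nonneg_left (by linarith) h0

lemma wt_shift (n j : ℤ) : wt (n - j) ≤ (|(j : ℝ)| + 1) ^ 2 * wt n := by
  unfold wt
  have h : |(n : ℝ)| ≤ |(j : ℝ)| + |((n - j : ℤ) : ℝ)| := by
    have := abs_add_le (j : ℝ) ((n - j : ℤ) : ℝ)
    push_cast at *
    simpa using this
  rw [mul_one_div, div_le_div_iff₀ (by positivity) (by positivity), one_mul, ← mul_pow]
  gcongr
  nlinarith [abs_nonneg (j : ℝ), abs_nonneg ((n - j : ℤ) : ℝ)]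

def VV : Submodule ℂ (ℤ → ℂ) where
  carrier := {f | ∃ A : ℝ, 0 ≤ A ∧ ∀ n, ‖f n‖ ≤ A * wt n}
  zero_mem' := ⟨0, le_rfl, by simp⟩
  add_mem' := by
    rintro f g ⟨A, hA, hf⟩ ⟨B, hB, hg⟩
    refine ⟨A + B, by positivity, fun n => ?_⟩
    refine (norm_add_le _ _).trans ?_
    rw [add_mul]
    exact add_le_add (hf n) (hg n)
  smul_mem' := by
    rintro a f ⟨A, hA, hf⟩
    refine ⟨‖a‖ * A, by positivity, fun n => ?_⟩
    rw [Pi.smul_apply, norm_smul, mul_assoc]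
    exact mul_le_mul_of_nonneg_left (hf n) (norm_nonneg _)

lemma VV_summable (x y : VV) (n : ℤ) : Summable (fun k => x.1 k * y.1 (n - k)) := by
  obtain ⟨A, hA, hx⟩ := x.2
  obtain ⟨B, hB, hy⟩ := y.2
  exact (conv_bound hx hy hA hB n).1

/-- right convolution operator -/
noncomputable def TT (y : VV) : Module.End ℂ VV where
  toFun a := ⟨conv a.1 y.1, by
    obtain ⟨A, hA, hx⟩ := a.2
    obtain ⟨B, hB, hy⟩ := y.2
    exact ⟨10 * (A * B), by positivity, fun n => (conv_bound hx hy hA hB n).2⟩⟩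
  map_add' a b := by
    ext n
    simp only [conv, Submodule.coe_add, Pi.add_apply, add_mul]
    exact (VV_summable a y n).tsum_add (VV_summable b y n)
  map_smul' r a := by
    ext n
    simp only [conv, Submodule.coe_smul, Pi.smul_apply, smul_eq_mul, mul_assoc, RingHom.id_apply]
    exact tsum_mul_left

lemma TT_apply (y a : VV) : (TT y a).1 = conv a.1 y.1 := rfl

noncomputable def SS (j : ℤ) : Module.End ℂ VV where
  toFun a := ⟨fun n => a.1 (n - j), by
    obtain ⟨A, hA, hx⟩ := a.2
    refine ⟨A * (|(j : ℝ)| + 1) ^ 2, by positivity, fun n => (hx _).trans ?_⟩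
    rw [mul_assoc]
    exact mul_le_mul_of_nonneg_left (wt_shift n j) hA⟩
  map_add' a b := rfl
  map_smul' r a := rfl

lemma SS_apply (j : ℤ) (a : VV) (n : ℤ) : (SS j a).1 n = a.1 (n - j) := rfl

lemma comm_SS (y : VV) (j : ℤ) : Commute (TT y) (SS j) := by
  refine LinearMap.ext fun a => Subtype.ext (funext fun n => ?_)
  change conv (SS j a).1 y.1 n = conv a.1 y.1 (n - j)
  simp only [conv, SS_apply]
  rw [← (Equiv.addRight j).tsum_eq]
  refine tsum_congr fun k => ?_
  simp only [Equiv.coe_addRight]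
  rw [add_sub_cancel_right, show n - (k + j) = n - j - k by ring]

lemma TT_add (x y : VV) : TT (x + y) = TT x + TT y := by
  refine LinearMap.ext fun a => Subtype.ext (funext fun n => ?_)
  change conv a.1 (x.1 + y.1) n = conv a.1 x.1 n + conv a.1 y.1 n
  simp only [conv, Pi.add_apply, mul_add]
  exact (VV_summable a x n).tsum_add (VV_summable a y n)

lemma TT_fin (c : VV) (l : ℕ) (h : ∀ n : ℤ, (l : ℤ) < |n| → c.1 n = 0) :
    TT c = ∑ j ∈ Finset.Icc (-(l : ℤ)) l, c.1 j • SS j := by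
  refine LinearMap.ext fun a => Subtype.ext (funext fun n => ?_)
  rw [TT_apply, LinearMap.sum_apply, Submodule.coe_sum, Finset.sum_apply]
  simp only [conv]
  rw [← (Equiv.subLeft n).tsum_eq, tsum_eq_sum (s := Finset.Icc (-(l : ℤ)) l)]
  · refine Finset.sum_congr rfl fun j _ => ?_
    simp [SS_apply, mul_comm]
  · intro j hj
    have : c.1 j = 0 := h j (by
      rw [Finset.mem_Icc, ← abs_le] at hj
      omega)
    simp [this]

lemma comm_TT (c y : VV) (l : ℕ) (h : ∀ n : ℤ, (l : ℤ) < |n| → c.1 n = 0) :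
    Commute (TT c) (TT y) := by
  rw [TT_fin c l h]
  refine Commute.sum_left _ _ _ fun j _ => ?_
  exact ((comm_SS y j).symm).smul_left _

noncomputable def dd : VV := ⟨fun n => if n = 0 then 1 else 0, 1, zero_le_one, fun n => by
  by_cases h : n = 0
  · simp [h, wt]
  · simpa [h] using (wt_pos n).le⟩

lemma TT_dd (y : VV) : TT y dd = y := by
  refine Subtype.ext (funext fun n => ?_)
  rw [TT_apply]
  simp only [conv]
  rw [tsum_eq_single 0]
  · simp [dd]
  · intro k hk
    simp [dd, hk]

lemma pow_TT (y : VV) (k : ℕ) : ((TT y ^ k) dd).1 = convPow y.1 k := by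
  induction k with
  | zero => rfl
  | succ k ih =>
    rw [pow_succ', Module.End.mul_apply, TT_apply, ih]
    rfl

lemma convPow_supp (c : ℤ → ℂ) (l : ℕ) (h : ∀ n : ℤ, (l : ℤ) < |n| → c n = 0) (k : ℕ) :
    ∀ n : ℤ, (l * k : ℤ) < |n| → convPow c k n = 0 := by
  induction k with
  | zero =>
    intro n hn
    have : n ≠ 0 := by rintro rfl; simp at hn
    simp [convPow, this]
  | succ k ih =>
    intro n hn
    simp only [convPow, conv]
    convert tsum_zero with j
    by_cases h1 : (l * k : ℤ) < |j|
    · simp [ih j h1]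
    · have : (l : ℤ) < |n - j| := by
        have := abs_add_le j (n - j)
        rw [add_sub_cancel] at this
        push_cast at hn
        linarith
      simp [h _ this]

lemma convPow_bound {β : ℝ} (hβ : 0 < β) {x : ℤ → ℂ} (hx : ∀ n, ‖x n‖ ≤ β * wt n) (m : ℕ) :
    ∀ n, ‖convPow x (m + 1) n‖ ≤ (10 ^ m * β ^ (m + 1)) * wt n := by
  induction m with
  | zero =>
    have : convPow x 1 = x := by
      have h := pow_TT ⟨x, β, hβ.le, hx⟩ 1
      rw [pow_one, TT_dd] at h
      exact h.symm
    intro n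
    simpa [this] using hx n
  | succ m ih =>
    intro n
    have := (conv_bound ih hx (by positivity) hβ.le n).2
    refine this.trans (le_of_eq ?_)
    ring

lemma convPow_add (c x : VV) (l : ℕ) (h : ∀ n : ℤ, (l : ℤ) < |n| → c.1 n = 0) (p : ℕ) (n : ℤ) :
    convPow (c.1 + x.1) p n = convPow c.1 p n + ∑ k ∈ Finset.range p, (p.choose k : ℂ) *
      ∑ j ∈ Finset.Icc (-(l * k : ℤ)) (l * k : ℤ), convPow c.1 k j * convPow x.1 (p - k) (n - j) := by
  have key : (TT (c + x) ^ p) dd = ∑ k ∈ Finset.range (p + 1),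
      (p.choose k : ℂ) • TT ((TT x ^ (p - k)) dd) ((TT c ^ k) dd) := by
    rw [TT_add, (comm_TT c x l h).add_pow, LinearMap.sum_apply]
    refine Finset.sum_congr rfl fun k _ => ?_
    have e : TT ((TT x ^ (p - k)) dd) ((TT c ^ k) dd) = (TT c ^ k * TT x ^ (p - k)) dd := by
      rw [← Module.End.mul_apply, ← ((comm_TT c _ l h).pow_left k).eq, Module.End.mul_apply, TT_dd,
        Module.End.mul_apply]
    rw [e, ← (Nat.cast_commute (p.choose k) _).eq, Module.End.mul_apply]
    rw [Module.End.natCast_apply, Nat.cast_smul_eq_nsmul]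
  have k2 := congrArg (fun a : VV => a.1 n) key
  have e0 : ((TT (c + x) ^ p) dd).1 n = convPow (c.1 + x.1) p n := congrFun (pow_TT (c + x) p) n
  simp only [e0] at k2
  rw [k2, Submodule.coe_sum, Finset.sum_apply, Finset.sum_range_succ, add_comm]
  congr 1
  · rw [Nat.choose_self, Nat.sub_self, pow_zero, Nat.cast_one, one_smul, TT_apply, pow_TT]
    simp only [conv, Module.End.one_apply]
    rw [tsum_eq_single n]
    · simp [dd]
    · intro k hk
      have : n - k ≠ 0 := by omega
      simp [dd, this]
  · refine Finset.sum_congr rfl fun k _ => ?_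
    rw [Submodule.coe_smul, Pi.smul_apply, smul_eq_mul, TT_apply, pow_TT, pow_TT]
    congr 1
    refine tsum_eq_sum fun j hj => ?_
    rw [convPow_supp c.1 l h k j, zero_mul]
    rw [Finset.mem_Icc, ← abs_le] at hj
    omega

/-- Lemma `lem:srodek`: refined estimate of `(K/p!)((c+x)^{*p})_n` for
`c` supported in `[-l,l]` and `x ∈ X_β`, with `C = 10`. -/
theorem perturbed_convPow_estimate (K β : ℝ) (hK : 0 < K) (hβ : 0 < β) (l : ℕ)
    (c : ℤ → ℂ) (hcX : ∃ β' > 0, memX β' c) (hsupp : ∀ n : ℤ, (l : ℤ) < |n| → c n = 0)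
    (p : ℕ) (hp : 1 < p) (x : ℤ → ℂ) (hx : memX β x) :
    ∀ n : ℤ,
      ‖(K / (Nat.factorial p : ℂ)) * convPow (c + x) p n‖ ≤
        (K / (Nat.factorial p : ℝ)) * (‖convPow c p n‖ +
          ∑ k ∈ Finset.range p, (p.choose k : ℝ) *
            ∑ j ∈ Finset.Icc (-(l * k : ℤ)) (l * k : ℤ),
              ‖convPow c k j‖ * 10 ^ (p - k - 1) * β ^ (p - k) / (|((n - j : ℤ) : ℝ)| + 1) ^ 2) := by
  intro n
  obtain ⟨β', hβ', hc, -⟩ := hcX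
  have hx1 : ∀ n, ‖x n‖ ≤ β * wt n := fun n => by
    simpa [wt, div_eq_mul_inv] using hx.1 n
  have hc1 : ∀ n, ‖c n‖ ≤ β' * wt n := fun n => by
    simpa [wt, div_eq_mul_inv] using hc n
  have hadd := convPow_add ⟨c, β', hβ'.le, hc1⟩ ⟨x, β, hβ.le, hx1⟩ l hsupp p n
  simp only at hadd
  have hn : ‖(K / (Nat.factorial p : ℂ))‖ = K / (Nat.factorial p : ℝ) := by
    rw [norm_div, Complex.norm_real, Complex.norm_natCast, Real.norm_of_nonneg hK.le]
  rw [norm_mul, hn, hadd]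
  refine mul_le_mul_of_nonneg_left ?_ (by positivity)
  refine (norm_add_le _ _).trans (add_le_add le_rfl ?_)
  refine norm_sum_le_of_le _ fun k hk => ?_
  rw [norm_mul, Complex.norm_natCast]
  refine mul_le_mul_of_nonneg_left ?_ (by positivity)
  refine norm_sum_le_of_le _ fun j _ => ?_
  rw [norm_mul]
  have hkp := Finset.mem_range.mp hk
  have hb := convPow_bound hβ hx1 (p - k - 1) (n - j)
  rw [show p - k - 1 + 1 = p - k by omega] at hb
  refine (mul_le_mul_of_nonneg_left hb (norm_nonneg _)).trans (le_of_eq ?_)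
  unfold wt
  ring
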